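/- arXiv:1903.03834 — 2 statements merged into one kernel-verified Lean document; each statement's English description precedes it below -/
import Mathlib

section
/- Suppose b > 0 and (n−1)(1−β) − 2mβ < 0 (this forces β ∈ (−1,0)), and for z ∈ (0, 𝔠·𝔷_c) let α(z) ∈ (𝔷_c, 𝔷_0) be the unique zero of F(·;z) in (𝔷_c, 𝔷_0), and set g(x,z) = (α(z) − K)/ψ(α(z);z) − (x − K)/ψ(x;z). Then there exists a unique point z_⊖ ∈ (K, 𝔠·𝔷_c) such that g(z,z) = (α(z) − K)/ψ(α(z);z) − (z − K)/z^n is strictly positive for all z ∈ (0, z_⊖) and strictly negative for all z ∈ (z_⊖, 𝔠·𝔷_c). For every z ∈ (0, z_⊖], g(x,z) ≥ 0 for all x ∈ (0, α(z)]. Furthermore, there exists a function 𝔷 : [z_⊖, 𝔠·𝔷_c) → [z_⊖, 𝔷_c) such that 𝔷(z_⊖) = z_⊖, and z < 𝔷(z) and g(𝔷(z), z) = 0 for all z ∈ (z_⊖, 𝔠·𝔷_c). -/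
open Set Filter Topology

noncomputable section

/-- The coefficient `A`. -/
def Acoef (n m beta : ℝ) : ℝ := (n * (1 - beta) - m * (1 + beta)) / ((n - m) * (1 + beta))

/-- The coefficient `B(z)`. -/
def Bcoef (n m beta z : ℝ) : ℝ := 2 * n * beta * z ^ (n - m) / ((n - m) * (1 + beta))

/-- The minimal excessive function `ψ(·;z)` of the skew geometric Brownian motion. -/
def psi (n m beta z x : ℝ) : ℝ :=
  if x ≤ z then x ^ n else Acoef n m beta * x ^ n + Bcoef n m beta z * x ^ m

/-- The function `F(·;z)`. -/
def Ffun (n m beta K z x : ℝ) : ℝ :=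
  ((n - 1) * x - n * K) * Acoef n m beta * x ^ (n - m)
    + ((m - 1) * x - m * K) * Bcoef n m beta z

/-- The critical point `𝔷_c = rK/(r-b)`. -/
def zcrit (r b K : ℝ) : ℝ := r * K / (r - b)

/-- The critical point `𝔷_0 = nK/(n-1)`. -/
def zzero (n K : ℝ) : ℝ := n * K / (n - 1)

/-- The critical point `𝔷_β = nK/(n - (1+β)/(1-β))`. -/
def zbeta (n K beta : ℝ) : ℝ := n * K / (n - (1 + beta) / (1 - beta))

/-- The constant `𝔠`. -/
def gothC (n m beta : ℝ) : ℝ :=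
  (-((n - 1) * (n * (1 - beta) - m * (1 + beta))) / (2 * m * (m - 1) * beta)) ^ ((1 : ℝ) / (n - m))

/-- The function `J(·;z)`. -/
def Jfun (n m beta K z x : ℝ) : ℝ :=
  ((n - 1) * x - n * K) * Acoef n m beta * x ^ (-m)
    - ((m - 1) * x - m * K) * Acoef n m beta * z ^ (n - m) * x ^ (-n)
    - (n - m) * Acoef n m beta * (z - K) * z ^ (-m)

/-- The function `G(·,·;z)`. -/
def Gfun (n m K z x y : ℝ) : ℝ :=
  ((n - 1) * y - n * K) * z ^ m * y ^ (-m) - ((m - 1) * y - m * K) * z ^ n * y ^ (-n)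
    - ((n - 1) * x - n * K) * z ^ m * x ^ (-m) + ((m - 1) * x - m * K) * z ^ n * x ^ (-n)

/-- The function `H(·,·;z)`. -/
def Hfun (n m beta K z x y : ℝ) : ℝ :=
  y ^ (-n) * Ffun n m beta K z y
    - (1 - beta) / (1 + beta) * (((n - 1) * x - n * K) * x ^ (-m))

/-!
The convexity condition forces `β < 0`, so `ψ = A x^n - G z^(n-m) x^m` on `x ≥ z` with `G > 0` and
`A = 1 + G`. The derivative of `(x-K)/ψ(x;z)` has the sign of `-F(x;z)`, and for `K ≤ x < 𝔷_0` the
equation `F(x;z) = 0` can be solved for `z`: `F(x;z)` has the sign of `z - Z(x)` (`FR_eq`), with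
`Z(x)^(n-m) = (A/G) x^(n-m) N(x)/D(x)`, `N = nK - (n-1)x`, `D = (1-m)x + mK`.
Since `N D - K x = (n-1)(1-m)(x-K)(𝔷_c-x)`, `Z` increases on `[K, 𝔷_c]` and decreases on
`[𝔷_c, 𝔷_0)`. Moreover `K < Z(K)`, and `Z(𝔷_c) = 𝔠 𝔷_c < 𝔷_c` by the convexity condition. So `α` is
the inverse of `Z` on `(𝔷_c, 𝔷_0)`, and no regularity of `α` is needed: `a = α(z)` is used as the
parameter in place of `z`.

In this parameter `(a-K)/ψ(a;Z(a)) = D(a)/(A(n-m)a^n)` (`ratio_eq`), so `g(z,z)` is an explicit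
function `Pf` of `a`. It is negative at `a = 𝔷_c`, because for `z = 𝔠 𝔷_c` the ratio decreases on
`[z, 𝔷_c]`, and positive when `Z(a) ≤ K`. In between, the quotient of its two terms has logarithmic
derivative `(log Z)'(a) · [K/(a-K) - K/(Z(a)-K)]`, a product of two negative factors since
`Z(a) < a`; hence it increases and `Pf` crosses zero once (`Lf_lt`, `Pf_crossing`), which gives `z_⊖`.

For fixed `z` the shape of `Z` shows that `(x-K)/ψ(x;z)` on `[z, α(z)]` is bounded by its larger end
value (`ratio_le`), which is the one at `α(z)` when `z ≤ z_⊖`. When `z > z_⊖` the value at `α(z)` lies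
between those at `𝔷_c` and at `z`, and the intermediate value theorem gives `𝔷(z)`
(`exists_level`).
-/

/-! ### Normalised parameters and auxiliary functions -/

/-- Normalised parameters: `A` and `G = -B(1)` are the coefficients of `ψ` when `β < 0`, `c` is the
critical point `𝔷_c`, and `hc` says that `𝔠 < 1`. -/
structure Params (n m K A G c : ℝ) : Prop where
  hn : 1 < n
  hm : m < 0
  hK : 0 < K
  hG : 0 < G
  hA : A = 1 + G
  hKc : K < c
  hzc : c * ((n - 1) * (1 - m)) = -(n * m * K)
  hc : A * (n * (n - 1)) < G * (-m * (1 - m))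

/-- `ψ(x;z)` on `x ≥ z`. -/
def psiR (n m A G z x : ℝ) : ℝ := A * x ^ n - G * z ^ (n - m) * x ^ m

/-- The factor `N(x) = nK - (n-1)x`, positive left of `𝔷_0`. -/
def Nf (n K x : ℝ) : ℝ := n * K - (n - 1) * x

/-- The factor `D(x) = (1-m)x + mK`, positive on `[K, ∞)`. -/
def Df (m K x : ℝ) : ℝ := (1 - m) * x + m * K

/-- `F(x;z)` written with `N` and `D`, for `B(z) = -G z^(n-m)`. -/
def FR (n m K A G z x : ℝ) : ℝ :=
  -(A * Nf n K x * x ^ (n - m)) + G * z ^ (n - m) * Df m K x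

/-- The logarithm of `Z`, where `Z` restricted to `(𝔷_c, 𝔷_0)` is the explicit inverse of `α`. -/
def ell (n m K A G x : ℝ) : ℝ :=
  Real.log x + (Real.log (A / G) + Real.log (Nf n K x) - Real.log (Df m K x)) / (n - m)

/-- `Z(x)` is the value of `z` for which `F(x;z) = 0`, for `x` in `[K, 𝔷_0)`. -/
def Zf (n m K A G x : ℝ) : ℝ := Real.exp (ell n m K A G x)

/-- The value `g(Z(a), Z(a))`, expressed through `a` alone. -/
def Pf (n m K A G a : ℝ) : ℝ :=
  Df m K a / (A * (n - m) * a ^ n) - (Zf n m K A G a - K) / (Zf n m K A G a) ^ n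

section
variable {n m K A G c : ℝ}

/-! ### Monotonicity of `Z` and the sign of `F` -/

lemma Zf_pos {x : ℝ} : 0 < Zf n m K A G x := Real.exp_pos _

lemma Params.c_lt (h : Params n m K A G c) : 0 < Nf n K c := by
  obtain ⟨hn, hm, hK, hG, hA, hKc, hzc, hc⟩ := h
  unfold Nf
  by_contra hcon
  push Not at hcon
  have h1 : n * K * (1 - m) ≤ (n - 1) * c * (1 - m) :=
    mul_le_mul_of_nonneg_right (by linarith) (by linarith)
  nlinarith [mul_pos (by linarith : (0:ℝ) < n) hK]

lemma Params.Nf_anti (h : Params n m K A G c) {x y : ℝ} (hxy : x ≤ y) (hy : 0 < Nf n K y) :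
    0 < Nf n K x := by
  have := h.hn
  unfold Nf at *
  nlinarith

lemma Params.Df_pos (h : Params n m K A G c) {x : ℝ} (hx : K ≤ x) : 0 < Df m K x := by
  obtain ⟨hn, hm, hK, hG, hA, hKc, hzc, hc⟩ := h
  unfold Df
  nlinarith

/-- The quadratic `N D - K x` vanishes exactly at `K` and at `𝔷_c`. -/
lemma Params.quad (h : Params n m K A G c) (x : ℝ) :
    Nf n K x * Df m K x - K * x = (n - 1) * (1 - m) * ((x - K) * (c - x)) := by
  have := h.hzc
  unfold Nf Df
  linear_combination (K - x) * this

lemma Params.ell_deriv (h : Params n m K A G c) {x : ℝ} (hx : K ≤ x) (hN : 0 < Nf n K x) :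
    HasDerivAt (ell n m K A G) (1 / x - K / (Nf n K x * Df m K x)) x := by
  have hD := h.Df_pos hx
  have hx0 : 0 < x := lt_of_lt_of_le h.hK hx
  have hp : 0 < n - m := by linarith [h.hn, h.hm]
  have dN : HasDerivAt (fun x => Nf n K x) (-(n - 1)) x := by
    unfold Nf
    simpa using ((hasDerivAt_id x).const_mul (n - 1)).const_sub (n * K)
  have dD : HasDerivAt (fun x => Df m K x) (1 - m) x := by
    unfold Df
    simpa using ((hasDerivAt_id x).const_mul (1 - m)).add_const (m * K)
  have := (Real.hasDerivAt_log hx0.ne').add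
    ((((dN.log hN.ne').const_add (Real.log (A / G))).sub (dD.log hD.ne')).div_const (n - m))
  refine HasDerivAt.congr_deriv this ?_
  have e : -(n - 1) / Nf n K x - (1 - m) / Df m K x
      = - (K * (n - m)) / (Nf n K x * Df m K x) := by
    rw [div_sub_div _ _ hN.ne' hD.ne']
    congr 1
    unfold Nf Df
    ring
  rw [e]
  field_simp
  ring

lemma Params.ell_deriv_eq (h : Params n m K A G c) {x : ℝ} (hx : K ≤ x) (hN : 0 < Nf n K x) :
    1 / x - K / (Nf n K x * Df m K x)
      = (n - 1) * (1 - m) * ((x - K) * (c - x)) / (x * (Nf n K x * Df m K x)) := by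
  have hD := h.Df_pos hx
  have hx0 : 0 < x := lt_of_lt_of_le h.hK hx
  rw [← h.quad, div_sub_div _ _ hx0.ne' (mul_pos hN hD).ne']
  ring

lemma Params.ell_cont (h : Params n m K A G c) {x : ℝ} (hx : K ≤ x) (hN : 0 < Nf n K x) :
    ContinuousAt (ell n m K A G) x := (h.ell_deriv hx hN).continuousAt

/-- Between `K` and `𝔷_c`, `Z` increases. -/
lemma Params.Zf_mono (h : Params n m K A G c) : StrictMonoOn (Zf n m K A G) (Icc K c) := by
  refine Real.exp_strictMono.comp_strictMonoOn (strictMonoOn_of_deriv_pos (convex_Icc _ _) ?_ ?_)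
  · intro x hx
    exact (h.ell_cont hx.1 (h.Nf_anti hx.2 h.c_lt)).continuousWithinAt
  · intro x hx
    rw [interior_Icc] at hx
    have hN := h.Nf_anti hx.2.le h.c_lt
    have hD := h.Df_pos hx.1.le
    rw [(h.ell_deriv hx.1.le hN).deriv, h.ell_deriv_eq hx.1.le hN]
    have h1 := h.hn
    have h2 := h.hm
    have h3 := h.hK.trans hx.1
    have : 0 < (x - K) * (c - x) := mul_pos (by linarith [hx.1]) (by linarith [hx.2])
    have : 0 < (n - 1) * (1 - m) := mul_pos (by linarith) (by linarith)
    positivity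

/-- Left of `𝔷_0` and right of `𝔷_c`, `Z` decreases. -/
lemma Params.Zf_anti (h : Params n m K A G c) {x y : ℝ} (hx : c ≤ x) (hxy : x < y)
    (hy : 0 < Nf n K y) : Zf n m K A G y < Zf n m K A G x := by
  have key : StrictAntiOn (ell n m K A G) (Icc c y) := by
    refine strictAntiOn_of_deriv_neg (convex_Icc _ _) ?_ ?_
    · intro x hx
      exact (h.ell_cont (h.hKc.le.trans hx.1) (h.Nf_anti hx.2 hy)).continuousWithinAt
    · intro x hx
      rw [interior_Icc] at hx
      have hN := h.Nf_anti hx.2.le hy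
      have hK1 := h.hKc.trans hx.1
      have hD := h.Df_pos hK1.le
      rw [(h.ell_deriv hK1.le hN).deriv, h.ell_deriv_eq hK1.le hN]
      have h1 := h.hn
      have h2 := h.hm
      have h3 := h.hK.trans hK1
      have : (x - K) * (c - x) < 0 := mul_neg_of_pos_of_neg (by linarith) (by linarith [hx.1])
      have : 0 < (n - 1) * (1 - m) := mul_pos (by linarith) (by linarith)
      apply div_neg_of_neg_of_pos
      · nlinarith
      · positivity
  exact Real.exp_strictMono (key ⟨hx, hxy.le⟩ ⟨hx.trans hxy.le, le_rfl⟩ hxy)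

lemma Params.A_pos (h : Params n m K A G c) : 0 < A := by
  have := h.hG
  have := h.hA
  linarith

lemma Params.p_pos (h : Params n m K A G c) : 0 < n - m := by
  linarith [h.hn, h.hm]

lemma Params.Zf_rpow (h : Params n m K A G c) {x : ℝ} (hx : K ≤ x) (hN : 0 < Nf n K x) :
    Zf n m K A G x ^ (n - m) = A / G * Nf n K x / Df m K x * x ^ (n - m) := by
  have hD := h.Df_pos hx
  have hx0 : 0 < x := lt_of_lt_of_le h.hK hx
  have hp := h.p_pos
  have hA := h.A_pos
  have hG := h.hG
  have hAG : 0 < A / G := by positivity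
  unfold Zf ell
  rw [← Real.exp_mul, add_mul, div_mul_cancel₀ _ hp.ne', Real.exp_add, Real.exp_sub, Real.exp_add,
    Real.exp_log hAG, Real.exp_log hN, Real.exp_log hD, Real.rpow_def_of_pos hx0]
  ring

/-- Factorisation showing that `F(x;z)` has the sign of `z - Z(x)`. -/
lemma Params.FR_eq (h : Params n m K A G c) {x : ℝ} (z : ℝ) (hx : K ≤ x) (hN : 0 < Nf n K x) :
    FR n m K A G z x = G * Df m K x * (z ^ (n - m) - Zf n m K A G x ^ (n - m)) := by
  have hD := h.Df_pos hx
  have hG := h.hG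
  rw [h.Zf_rpow hx hN]
  unfold FR
  field_simp
  ring

lemma Params.FR_neg (h : Params n m K A G c) {x z : ℝ} (hz : 0 < z) (hx : K ≤ x)
    (hN : 0 < Nf n K x) (hlt : z < Zf n m K A G x) : FR n m K A G z x < 0 := by
  rw [h.FR_eq z hx hN]
  have := Real.rpow_lt_rpow hz.le hlt h.p_pos
  exact mul_neg_of_pos_of_neg (mul_pos h.hG (h.Df_pos hx)) (by linarith)

lemma Params.FR_pos (h : Params n m K A G c) {x z : ℝ} (hx : K ≤ x)
    (hN : 0 < Nf n K x) (hlt : Zf n m K A G x < z) : 0 < FR n m K A G z x := by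
  rw [h.FR_eq z hx hN]
  have := Real.rpow_lt_rpow Zf_pos.le hlt h.p_pos
  exact mul_pos (mul_pos h.hG (h.Df_pos hx)) (by linarith)

lemma Params.Zf_of_FR (h : Params n m K A G c) {x z : ℝ} (hz : 0 < z) (hx : K ≤ x)
    (hN : 0 < Nf n K x) (h0 : FR n m K A G z x = 0) : Zf n m K A G x = z := by
  rcases lt_trichotomy (Zf n m K A G x) z with h1 | h1 | h1
  · exact absurd h0 (h.FR_pos hx hN h1).ne'
  · exact h1
  · exact absurd h0 (h.FR_neg hz hx hN h1).ne

/-- The bound `𝔠 < 1`, since `Z(𝔷_c) = 𝔠𝔷_c`. -/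
lemma Params.Zf_c_lt (h : Params n m K A G c) : Zf n m K A G c < c := by
  have hc0 := h.hK.trans h.hKc
  have hp := h.p_pos
  rw [← Real.rpow_lt_rpow_iff Zf_pos.le hc0.le hp, h.Zf_rpow h.hKc.le h.c_lt]
  have hD := h.Df_pos h.hKc.le
  have hN := h.c_lt
  have h1 : A / G * Nf n K c / Df m K c < 1 := by
    obtain ⟨hn, hm, hK, hG, hA, hKc, hzc, hc⟩ := h
    rw [div_lt_one hD, div_mul_eq_mul_div, div_lt_iff₀ hG]
    -- at `c` the two factors are explicit: `N = nK/(1-m)` and `D = -mK/(n-1)`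
    have e1 : Nf n K c * (1 - m) = n * K := by unfold Nf; linarith
    have e2 : Df m K c * (n - 1) = -m * K := by unfold Df; linarith
    have hs : 0 < (1 - m) * (n - 1) := mul_pos (by linarith) (by linarith)
    refine lt_of_mul_lt_mul_right ?_ hs.le
    calc A * Nf n K c * ((1 - m) * (n - 1)) = A * (n * (n - 1)) * K := by
          linear_combination A * (n - 1) * e1
      _ < G * (-m * (1 - m)) * K := mul_lt_mul_of_pos_right hc hK
      _ = Df m K c * G * ((1 - m) * (n - 1)) := by
          linear_combination (-G) * (1 - m) * e2
  have h2 : 0 < c ^ (n - m) := Real.rpow_pos_of_pos hc0 _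
  nlinarith

lemma Params.K_lt_Zf_K (h : Params n m K A G c) : K < Zf n m K A G K := by
  have hN := h.Nf_anti h.hKc.le h.c_lt
  have hp := h.p_pos
  rw [← Real.rpow_lt_rpow_iff h.hK.le Zf_pos.le hp, h.Zf_rpow le_rfl hN]
  have h2 : 0 < K ^ (n - m) := Real.rpow_pos_of_pos h.hK _
  have h1 : A / G * Nf n K K / Df m K K = A / G := by
    have e1 : Nf n K K = K := by unfold Nf; ring
    have e2 : Df m K K = K := by unfold Df; ring
    rw [e1, e2, mul_div_cancel_right₀ _ h.hK.ne']
  rw [h1]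
  have h3 : 1 < A / G := by rw [one_lt_div h.hG]; linarith [h.hA]
  nlinarith

lemma Params.K_lt_Zf_c (h : Params n m K A G c) : K < Zf n m K A G c :=
  h.K_lt_Zf_K.trans (h.Zf_mono ⟨le_rfl, h.hKc.le⟩ ⟨h.hKc.le, le_rfl⟩ h.hKc)

/-! ### Monotonicity of `(x-K)/ψ(x;z)` -/

lemma Params.psiR_pos (h : Params n m K A G c) {x z : ℝ} (hz : 0 < z) (hx : z ≤ x) :
    0 < psiR n m A G z x := by
  have hx0 := hz.trans_le hx
  have e : x ^ n = x ^ (n - m) * x ^ m := by rw [← Real.rpow_add hx0]; congr 1; ring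
  have h1 := Real.rpow_le_rpow hz.le hx h.p_pos.le
  have h2 := Real.rpow_pos_of_pos hx0 m
  have h3 := Real.rpow_pos_of_pos hx0 (n - m)
  have hG := h.hG
  have : psiR n m A G z x = (x ^ (n - m) + G * (x ^ (n - m) - z ^ (n - m))) * x ^ m := by
    unfold psiR; rw [e, h.hA]; ring
  rw [this]
  have : 0 ≤ G * (x ^ (n - m) - z ^ (n - m)) := mul_nonneg hG.le (by linarith)
  positivity

/-- The derivative of `(x-K)/ψ(x;z)` has the sign of `-F(x;z)`. -/
lemma Params.ratio_deriv (h : Params n m K A G c) {x z : ℝ} (hz : 0 < z) (hx : z ≤ x) :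
    HasDerivAt (fun x => (x - K) / psiR n m A G z x)
      (-(x ^ (m - 1) * FR n m K A G z x) / psiR n m A G z x ^ 2) x := by
  have hx0 := hz.trans_le hx
  have d1 : HasDerivAt (fun x => psiR n m A G z x)
      (A * (n * x ^ (n - 1)) - G * z ^ (n - m) * (m * x ^ (m - 1))) x := by
    unfold psiR
    exact ((Real.hasDerivAt_rpow_const (Or.inl hx0.ne')).const_mul A).sub
      ((Real.hasDerivAt_rpow_const (Or.inl hx0.ne')).const_mul (G * z ^ (n - m)))
  have d2 := ((hasDerivAt_id x).sub_const K).div d1 (h.psiR_pos hz hx).ne'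
  refine HasDerivAt.congr_deriv d2 ?_
  congr 1
  have e1 : x ^ n = x ^ (m - 1) * x * x ^ (n - m) := by
    rw [← Real.rpow_add_one hx0.ne', ← Real.rpow_add hx0]; congr 1; ring
  have e2 : x ^ (n - 1) = x ^ (m - 1) * x ^ (n - m) := by
    rw [← Real.rpow_add hx0]; congr 1; ring
  have e3 : x ^ m = x ^ (m - 1) * x := by
    rw [← Real.rpow_add_one hx0.ne']; congr 1; ring
  unfold psiR FR Nf Df
  simp only [id]
  rw [e1, e2, e3]
  ring

lemma Params.ratio_mono (h : Params n m K A G c) {u v z : ℝ} (hz : 0 < z) (hu : z ≤ u)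
    (huv : u < v) (hF : ∀ x ∈ Ioo u v, FR n m K A G z x < 0) :
    (u - K) / psiR n m A G z u < (v - K) / psiR n m A G z v := by
  have key : StrictMonoOn (fun x => (x - K) / psiR n m A G z x) (Icc u v) := by
    refine strictMonoOn_of_deriv_pos (convex_Icc _ _) ?_ ?_
    · intro x hx
      exact (h.ratio_deriv hz (hu.trans hx.1)).continuousAt.continuousWithinAt
    · intro x hx
      rw [interior_Icc] at hx
      have hzx := hu.trans hx.1.le
      rw [(h.ratio_deriv hz hzx).deriv]
      have h1 := Real.rpow_pos_of_pos (hz.trans_le hzx) (m - 1)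
      have h2 := h.psiR_pos hz hzx
      have h3 := mul_neg_of_pos_of_neg h1 (hF x hx)
      exact div_pos (by linarith) (by positivity)
  exact key ⟨le_rfl, huv.le⟩ ⟨huv.le, le_rfl⟩ huv

lemma Params.ratio_anti (h : Params n m K A G c) {u v z : ℝ} (hz : 0 < z) (hu : z ≤ u)
    (huv : u < v) (hF : ∀ x ∈ Ioo u v, 0 < FR n m K A G z x) :
    (v - K) / psiR n m A G z v < (u - K) / psiR n m A G z u := by
  have key : StrictAntiOn (fun x => (x - K) / psiR n m A G z x) (Icc u v) := by
    refine strictAntiOn_of_deriv_neg (convex_Icc _ _) ?_ ?_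
    · intro x hx
      exact (h.ratio_deriv hz (hu.trans hx.1)).continuousAt.continuousWithinAt
    · intro x hx
      rw [interior_Icc] at hx
      have hzx := hu.trans hx.1.le
      rw [(h.ratio_deriv hz hzx).deriv]
      have h1 := Real.rpow_pos_of_pos (hz.trans_le hzx) (m - 1)
      have h2 := h.psiR_pos hz hzx
      have h3 := mul_pos h1 (hF x hx)
      exact div_neg_of_neg_of_pos (by linarith) (by positivity)
  exact key ⟨le_rfl, huv.le⟩ ⟨huv.le, le_rfl⟩ huv

lemma Params.psiR_self (h : Params n m K A G c) {z : ℝ} (hz : 0 < z) :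
    psiR n m A G z z = z ^ n := by
  have e : z ^ n = z ^ (n - m) * z ^ m := by rw [← Real.rpow_add hz]; congr 1; ring
  unfold psiR
  rw [e, h.hA]
  ring

/-! ### The single crossing of `g(z,z)` -/

/-- The first-order condition `F(a;z) = 0` eliminates `z` from `(a-K)/ψ(a;z)`. -/
lemma Params.ratio_eq (h : Params n m K A G c) {a : ℝ} (ha : K < a) (hN : 0 < Nf n K a) :
    (a - K) / psiR n m A G (Zf n m K A G a) a = Df m K a / (A * (n - m) * a ^ n) := by
  have ha0 := h.hK.trans ha
  have hD := h.Df_pos ha.le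
  have hp := h.p_pos
  have hA := h.A_pos
  have hG := h.hG
  have hK : 0 < a - K := by linarith
  have han := Real.rpow_pos_of_pos ha0 n
  have e : a ^ n = a ^ (n - m) * a ^ m := by rw [← Real.rpow_add ha0]; congr 1; ring
  have e2 : psiR n m A G (Zf n m K A G a) a = A * (n - m) * a ^ n * (a - K) / Df m K a := by
    unfold psiR
    rw [h.Zf_rpow ha.le hN, e]
    field_simp
    unfold Nf Df
    ring
  rw [e2]
  field_simp

lemma Params.Pf_eq (h : Params n m K A G c) {a : ℝ} (ha : K < a) (hN : 0 < Nf n K a) :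
    (a - K) / psiR n m A G (Zf n m K A G a) a - (Zf n m K A G a - K) / Zf n m K A G a ^ n
      = Pf n m K A G a := by
  rw [h.ratio_eq ha hN]; rfl

lemma Params.Pf_pos (h : Params n m K A G c) {a : ℝ} (ha : K < a)
    (hZ : Zf n m K A G a ≤ K) : 0 < Pf n m K A G a := by
  have hD := h.Df_pos ha.le
  have hp := h.p_pos
  have hA := h.A_pos
  have han := Real.rpow_pos_of_pos (h.hK.trans ha) n
  have hZn : 0 < Zf n m K A G a ^ n := Real.rpow_pos_of_pos (Real.exp_pos _) n
  have h1 : (Zf n m K A G a - K) / Zf n m K A G a ^ n ≤ 0 :=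
    div_nonpos_of_nonpos_of_nonneg (by linarith) hZn.le
  have h2 : 0 < Df m K a / (A * (n - m) * a ^ n) := by positivity
  unfold Pf
  linarith

/-- At `z = 𝔠𝔷_c` the ratio `(x-K)/ψ(x;z)` decreases on `[z, 𝔷_c]`. -/
lemma Params.Pf_c_neg (h : Params n m K A G c) : Pf n m K A G c < 0 := by
  have hZ0 : 0 < Zf n m K A G c := Real.exp_pos _
  rw [← h.Pf_eq h.hKc h.c_lt]
  have := h.ratio_anti (u := Zf n m K A G c) (v := c) hZ0 le_rfl h.Zf_c_lt (by
    intro x hx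
    have hKx := (h.K_lt_Zf_c.trans hx.1).le
    exact h.FR_pos hKx (h.Nf_anti hx.2.le h.c_lt)
      (h.Zf_mono ⟨hKx, hx.2.le⟩ ⟨h.hKc.le, le_rfl⟩ hx.2))
  rw [h.psiR_self hZ0] at this
  linarith

lemma Params.Zf_deriv (h : Params n m K A G c) {x : ℝ} (hx : K ≤ x) (hN : 0 < Nf n K x) :
    HasDerivAt (Zf n m K A G)
      (Zf n m K A G x * (1 / x - K / (Nf n K x * Df m K x))) x :=
  (h.ell_deriv hx hN).exp

lemma Params.Pf_cont (h : Params n m K A G c) {a : ℝ} (ha : K ≤ a) (hN : 0 < Nf n K a) :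
    ContinuousAt (Pf n m K A G) a := by
  have hc := (h.Zf_deriv ha hN).continuousAt
  have ha0 := h.hK.trans_le ha
  have hZ : 0 < Zf n m K A G a := Real.exp_pos _
  have hden : A * (n - m) * a ^ n ≠ 0 :=
    (mul_pos (mul_pos h.A_pos h.p_pos) (Real.rpow_pos_of_pos ha0 n)).ne'
  unfold Pf
  refine ContinuousAt.sub (ContinuousAt.div ?_ ?_ hden) (ContinuousAt.div ?_ ?_ ?_)
  · unfold Df; fun_prop
  · exact continuousAt_const.mul (Real.continuousAt_rpow_const a n (Or.inl ha0.ne'))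
  · exact hc.sub continuousAt_const
  · exact hc.rpow_const (Or.inl hZ.ne')
  · exact (Real.rpow_pos_of_pos hZ n).ne'

/-- Logarithm, up to the constant `log (A (n-m))`, of the quotient of the two terms of `Pf`. -/
def Lf (n m K A G a : ℝ) : ℝ :=
  Real.log (Df m K a) - n * Real.log a - Real.log (Zf n m K A G a - K) + n * ell n m K A G a

/-- The logarithmic derivative of the quotient is `(log Z)'` times the difference of
`K/(x-K) - (n-1)` at `x = a` and at `x = Z(a) < a`; both factors are negative. -/
lemma Params.Lf_lt (h : Params n m K A G c) {a a' : ℝ} (ha : c < a) (haa : a < a')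
    (hN' : 0 < Nf n K a') (hZ' : K < Zf n m K A G a') :
    Lf n m K A G a < Lf n m K A G a' := by
  have hder : ∀ x ∈ Icc a a', ∃ d, 0 < d ∧ HasDerivAt (Lf n m K A G) d x := by
    intro x hx
    have hcx : c < x := ha.trans_le hx.1
    have hKx := h.hKc.trans hcx
    have hN := h.Nf_anti hx.2 hN'
    have hD := h.Df_pos hKx.le
    have hx0 := h.hK.trans hKx
    have hZ : K < Zf n m K A G x := by
      rcases hx.2.eq_or_lt with e | e
      · rw [e]; exact hZ'
      · exact hZ'.trans (h.Zf_anti hcx.le e hN')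
    have hZx : Zf n m K A G x < x :=
      ((h.Zf_anti le_rfl hcx hN).trans h.Zf_c_lt).trans hcx
    have dD : HasDerivAt (fun x => Df m K x) (1 - m) x := by
      unfold Df
      simpa using ((hasDerivAt_id x).const_mul (1 - m)).add_const (m * K)
    have dl := h.ell_deriv hKx.le hN
    have dZ := (h.Zf_deriv hKx.le hN).sub_const K
    have d := (((dD.log hD.ne').sub ((Real.hasDerivAt_log hx0.ne').const_mul n)).sub
      (dZ.log (by linarith))).add (dl.const_mul n)
    refine ⟨_, ?_, d⟩
    rw [h.ell_deriv_eq hKx.le hN]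
    generalize Zf n m K A G x = Z at *
    have hZK : 0 < Z - K := by linarith
    have hxK : 0 < x - K := by linarith
    have key : (1 - m) / Df m K x - n * x⁻¹
        - Z * ((n - 1) * (1 - m) * ((x - K) * (c - x)) / (x * (Nf n K x * Df m K x))) / (Z - K)
        + n * ((n - 1) * (1 - m) * ((x - K) * (c - x)) / (x * (Nf n K x * Df m K x)))
        = (n - 1) * (1 - m) * ((x - K) * (x - c)) / (x * (Nf n K x * Df m K x))
          * (K * (x - Z) / ((Z - K) * (x - K))) := by
      have e0 : (1 - m) / Df m K x - n * x⁻¹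
          = (n - 1) * (1 - m) * (c - x) / (x * Df m K x) := by
        field_simp
        have := h.hzc
        unfold Df
        linear_combination (-1 : ℝ) * this
      rw [e0]
      have e1 : (n - 1) * (1 - m) * (c - x) / (x * Df m K x)
          = (n - 1) * (1 - m) * ((x - K) * (c - x)) / (x * (Nf n K x * Df m K x))
            * (Nf n K x / (x - K)) := by
        field_simp
      rw [e1]
      generalize hT : x * (Nf n K x * Df m K x) = T
      have hT0 : T ≠ 0 := by rw [← hT]; positivity
      field_simp
      unfold Nf
      ring
    rw [key]
    have h1 := h.hn
    have h2 := h.hm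
    have h3 := h.hK
    have : 0 < (n - 1) * (1 - m) := mul_pos (by linarith) (by linarith)
    have : 0 < x - c := by linarith
    have : 0 < x - Z := by linarith
    positivity
  have key : StrictMonoOn (Lf n m K A G) (Icc a a') := by
    refine strictMonoOn_of_deriv_pos (convex_Icc _ _) ?_ ?_
    · intro x hx
      obtain ⟨d, -, hd⟩ := hder x hx
      exact hd.continuousAt.continuousWithinAt
    · intro x hx
      rw [interior_Icc] at hx
      obtain ⟨d, hd0, hd⟩ := hder x (Ioo_subset_Icc_self hx)
      rw [hd.deriv]
      exact hd0
  exact key ⟨le_rfl, haa.le⟩ ⟨haa.le, le_rfl⟩ haa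

/-- `Pf` is a positive multiple of `exp (Lf) - A (n-m)` where `Z > K`. -/
lemma Params.Pf_factor (h : Params n m K A G c) {a : ℝ} (ha : K < a)
    (hZ : K < Zf n m K A G a) :
    ∃ t > 0, Pf n m K A G a = t * (Real.exp (Lf n m K A G a) - A * (n - m)) := by
  have ha0 := h.hK.trans ha
  have hD := h.Df_pos ha.le
  have hp := h.p_pos
  have hA := h.A_pos
  have hZK : 0 < Zf n m K A G a - K := by linarith
  have hZ0 : 0 < Zf n m K A G a := h.hK.trans hZ
  have hZn := Real.rpow_pos_of_pos hZ0 n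
  have han := Real.rpow_pos_of_pos ha0 n
  refine ⟨(Zf n m K A G a - K) / Zf n m K A G a ^ n / (A * (n - m)), by positivity, ?_⟩
  have e : Real.exp (Lf n m K A G a)
      = Df m K a / a ^ n / (Zf n m K A G a - K) * Zf n m K A G a ^ n := by
    have e1 : a ^ n = Real.exp (n * Real.log a) := by
      rw [Real.rpow_def_of_pos ha0, mul_comm]
    have e2 : Zf n m K A G a ^ n = Real.exp (n * ell n m K A G a) := by
      unfold Zf; rw [← Real.exp_mul, mul_comm]
    rw [e1, e2]
    unfold Lf
    rw [Real.exp_add, Real.exp_sub, Real.exp_sub, Real.exp_log hD, Real.exp_log hZK]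
  rw [e]
  unfold Pf
  field_simp

/-- `Pf` changes sign at most once where `Z > K`: it is positive right of a zero and negative left
of it, which for `z = Z(a)` means negative beyond the crossing and positive before it. -/
lemma Params.Pf_crossing (h : Params n m K A G c) {a a' : ℝ} (ha : c < a) (haa : a < a')
    (hN' : 0 < Nf n K a') (hZ' : K < Zf n m K A G a') :
    (Pf n m K A G a = 0 → 0 < Pf n m K A G a') ∧ (Pf n m K A G a' = 0 → Pf n m K A G a < 0) := by
  have hKa := h.hKc.trans ha
  have hZ := hZ'.trans (h.Zf_anti ha.le haa hN')
  obtain ⟨t, ht, e⟩ := h.Pf_factor hKa hZ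
  obtain ⟨t', ht', e'⟩ := h.Pf_factor (hKa.trans haa) hZ'
  have hL := Real.exp_lt_exp.2 (h.Lf_lt ha haa hN' hZ')
  rw [e, e']
  constructor
  · intro h0
    have := (mul_eq_zero.1 h0).resolve_left ht.ne'
    exact mul_pos ht' (by linarith)
  · intro h0
    have := (mul_eq_zero.1 h0).resolve_left ht'.ne'
    exact mul_neg_of_pos_of_neg ht (by linarith)

/-! ### Comparison with the value at `α(z)` -/

/-- The part of `(x-K)/ψ(x;z)` on `x ≤ z` increases up to `𝔷_0`. -/
lemma Params.pow_ratio_mono (h : Params n m K A G c) {x z : ℝ} (hx : 0 < x) (hxz : x ≤ z)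
    (hz : 0 < Nf n K z) : (x - K) / x ^ n ≤ (z - K) / z ^ n := by
  have key : MonotoneOn (fun x : ℝ => (x - K) / x ^ n) (Icc x z) := by
    have hd : ∀ y ∈ Icc x z, HasDerivAt (fun x : ℝ => (x - K) / x ^ n)
        ((1 * y ^ n - (y - K) * (n * y ^ (n - 1))) / (y ^ n) ^ 2) y := by
      intro y hy
      have hy0 := hx.trans_le hy.1
      exact ((hasDerivAt_id y).sub_const K).div (Real.hasDerivAt_rpow_const (Or.inl hy0.ne'))
        (Real.rpow_pos_of_pos hy0 n).ne'
    refine monotoneOn_of_deriv_nonneg (convex_Icc _ _) ?_ ?_ ?_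
    · intro y hy; exact (hd y hy).continuousAt.continuousWithinAt
    · intro y hy
      exact (hd y (interior_subset hy)).differentiableAt.differentiableWithinAt
    · intro y hy
      have hy := interior_subset hy
      rw [(hd y hy).deriv]
      have hy0 := hx.trans_le hy.1
      have e : y ^ n = y ^ (n - 1) * y := by
        rw [← Real.rpow_add_one hy0.ne']; congr 1; ring
      have e2 : 1 * y ^ n - (y - K) * (n * y ^ (n - 1)) = y ^ (n - 1) * Nf n K y := by
        rw [e]; unfold Nf; ring
      rw [e2]
      have := h.Nf_anti hy.2 hz
      have := Real.rpow_pos_of_pos hy0 (n - 1)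
      positivity
  exact key ⟨le_rfl, hxz⟩ ⟨hxz, le_rfl⟩ hxz

/-- On `[z, α]` the ratio is at most the larger of its two end values. -/
lemma Params.ratio_le (h : Params n m K A G c) {a z x : ℝ} (hz : 0 < z) (ha : c < a)
    (hN : 0 < Nf n K a) (hZ : Zf n m K A G a = z) (hzx : z ≤ x) (hxa : x ≤ a)
    (hend : (z - K) / z ^ n ≤ (a - K) / psiR n m A G z a) :
    (x - K) / psiR n m A G z x ≤ (a - K) / psiR n m A G z a := by
  have hKa := h.hKc.trans ha
  have hza := hzx.trans hxa
  rcases le_or_gt x K with hxK | hxK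
  · have h1 : (x - K) / psiR n m A G z x ≤ 0 :=
      div_nonpos_of_nonpos_of_nonneg (by linarith) (h.psiR_pos hz hzx).le
    have h2 : 0 ≤ (a - K) / psiR n m A G z a :=
      div_nonneg (by linarith) (h.psiR_pos hz hza).le
    linarith
  rcases hxa.eq_or_lt with e | hxa'
  · rw [e]
  have hc_of : ∀ y, c ≤ y → y < a → z < Zf n m K A G y := by
    intro y hy hya
    rw [← hZ]; exact h.Zf_anti hy hya hN
  rcases le_or_gt z (Zf n m K A G x) with h1 | h1
  · refine (h.ratio_mono hz hzx hxa' ?_).le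
    intro y hy
    refine h.FR_neg hz (hxK.trans hy.1).le (h.Nf_anti hy.2.le hN) ?_
    rcases le_or_gt c y with hcy | hcy
    · exact hc_of y hcy hy.2
    · exact h1.trans_lt (h.Zf_mono ⟨hxK.le, (hy.1.trans hcy).le⟩ ⟨(hxK.trans hy.1).le, hcy.le⟩ hy.1)
  · have hxc : x < c := by
      by_contra hcon
      exact absurd (hc_of x (not_lt.1 hcon) hxa') (not_lt.2 h1.le)
    have hKz : K < z := h.K_lt_Zf_K.trans_le
      (((h.Zf_mono ⟨le_rfl, h.hKc.le⟩ ⟨hxK.le, hxc.le⟩ hxK).trans h1).le)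
    rcases hzx.eq_or_lt with e | hzx'
    · rw [← e, h.psiR_self hz]; exact hend
    have := h.ratio_anti hz le_rfl hzx' (by
      intro y hy
      have hKy := (hKz.trans hy.1).le
      exact h.FR_pos hKy (h.Nf_anti hy.2.le (h.Nf_anti hxc.le h.c_lt))
        ((h.Zf_mono ⟨hKy, (hy.2.trans hxc).le⟩ ⟨hxK.le, hxc.le⟩ hy.2).trans h1))
    rw [h.psiR_self hz] at this
    linarith

/-- When the ratio is larger at `z` than at `α`, it takes the value at `α` inside `(z, 𝔷_c)`. -/
lemma Params.exists_level (h : Params n m K A G c) {a z : ℝ} (hz : 0 < z) (ha : c < a)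
    (hN : 0 < Nf n K a) (hZ : Zf n m K A G a = z)
    (hend : (a - K) / psiR n m A G z a < (z - K) / z ^ n) :
    ∃ x, z < x ∧ x < c ∧ (x - K) / psiR n m A G z x = (a - K) / psiR n m A G z a := by
  have hzc : z < c := by
    rw [← hZ]; exact (h.Zf_anti le_rfl ha hN).trans h.Zf_c_lt
  have hca := h.ratio_mono hz hzc.le ha (by
    intro y hy
    refine h.FR_neg hz (h.hKc.trans hy.1).le (h.Nf_anti hy.2.le hN) ?_
    rw [← hZ]; exact h.Zf_anti hy.1.le hy.2 hN)
  have hcont : ContinuousOn (fun x => (x - K) / psiR n m A G z x) (Icc z c) := fun x hx =>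
    (h.ratio_deriv hz hx.1).continuousAt.continuousWithinAt
  obtain ⟨x, hx, hx'⟩ := intermediate_value_Ioo' hzc.le hcont
    ⟨hca, by simpa only [h.psiR_self hz] using hend⟩
  exact ⟨x, hx.1, hx.2, hx'⟩

end
/-! ### Reduction to the normalised parameters -/

/-- The hypotheses of the theorem in normalised form, with `A` and `G` both given explicitly. -/
lemma params_of (sigma b r K beta n m : ℝ)
    (hsigma : sigma ≠ 0) (hbr : b < r) (hK : 0 < K)
    (hb1 : -1 < beta) (hb2 : beta < 1)
    (hm : m < 0) (hn : 0 < n)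
    (hmroot : 1 / 2 * sigma ^ 2 * m ^ 2 + (b - 1 / 2 * sigma ^ 2) * m - r = 0)
    (hnroot : 1 / 2 * sigma ^ 2 * n ^ 2 + (b - 1 / 2 * sigma ^ 2) * n - r = 0)
    (hb : 0 < b)
    (hconv : (n - 1) * (1 - beta) - 2 * m * beta < 0) :
    beta < 0 ∧ Params n m K (Acoef n m beta) (-(2 * n * beta) / ((n - m) * (1 + beta)))
      (zcrit r b K) := by
  have hp : 0 < n - m := by linarith
  have hs : 0 < sigma ^ 2 := by positivity
  -- Vieta's relations
  have v1 : sigma ^ 2 * (n + m) = sigma ^ 2 - 2 * b := by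
    refine mul_left_cancel₀ hp.ne' ?_
    linear_combination 2 * hnroot - 2 * hmroot
  have v2 : sigma ^ 2 * (n * m) = -2 * r := by
    linear_combination (n) * v1 - 2 * hnroot
  have v3 : sigma ^ 2 * ((n - 1) * (1 - m)) = 2 * (r - b) := by
    linear_combination v1 - v2
  have hn1 : 1 < n := by
    have : 0 < (n - 1) * (1 - m) := by
      by_contra hcon
      have := mul_nonpos_of_nonneg_of_nonpos hs.le (not_lt.1 hcon)
      linarith
    have := (pos_iff_pos_of_mul_pos this).2 (by linarith)
    linarith
  have hbeta : beta < 0 := by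
    by_contra hcon
    have h1 : 0 ≤ (n - 1) * (1 - beta) := mul_nonneg (by linarith) (by linarith)
    have h2 : 0 ≤ -m * beta := mul_nonneg (by linarith) (not_lt.1 hcon)
    linarith
  have hB : 0 < 1 + beta := by linarith
  refine ⟨hbeta, hn1, hm, hK, ?_, ?_, ?_, ?_, ?_⟩
  · apply div_pos
    · nlinarith
    · positivity
  · unfold Acoef
    field_simp
    ring
  · unfold zcrit
    rw [lt_div_iff₀ (by linarith)]
    nlinarith
  · unfold zcrit
    have hrb : r - b ≠ 0 := by linarith
    rw [div_mul_eq_mul_div, div_eq_iff hrb]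
    refine mul_left_cancel₀ hs.ne' ?_
    linear_combination r * K * v3 + (r - b) * K * v2
  · unfold Acoef
    rw [div_mul_eq_mul_div, div_mul_eq_mul_div]
    apply div_lt_div_of_pos_right _ (by positivity)
    have h1 : (n - 1) * (n * (1 - beta) - m * (1 + beta)) < 2 * (-beta) * (m * (m - 1)) := by
      have := mul_lt_mul_of_pos_left hconv hp
      linarith
    nlinarith [mul_lt_mul_of_pos_left h1 hn]

/-- `𝔠 𝔷_c = Z(𝔷_c)`. -/
lemma gothC_eq {n m K beta c : ℝ} (hb1 : -1 < beta) (hbeta : beta < 0)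
    (h : Params n m K (Acoef n m beta) (-(2 * n * beta) / ((n - m) * (1 + beta))) c) :
    gothC n m beta * c
      = Zf n m K (Acoef n m beta) (-(2 * n * beta) / ((n - m) * (1 + beta))) c := by
  have hc0 := h.hK.trans h.hKc
  have hp := h.p_pos
  have hm := h.hm
  have hn := h.hn
  have hD := h.Df_pos h.hKc.le
  have hB : 0 < 1 + beta := by linarith
  have hA := h.A_pos
  have hG := h.hG
  have hN := h.c_lt
  have base : -((n - 1) * (n * (1 - beta) - m * (1 + beta))) / (2 * m * (m - 1) * beta)
      = Acoef n m beta / (-(2 * n * beta) / ((n - m) * (1 + beta))) * Nf n K c / Df m K c := by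
    have e1 : Nf n K c = n * K / (1 - m) := by
      rw [eq_div_iff (by linarith)]; unfold Nf; linarith [h.hzc]
    have e2 : Df m K c = -m * K / (n - 1) := by
      rw [eq_div_iff (by linarith)]; unfold Df; linarith [h.hzc]
    have h1 : 1 - m ≠ 0 := by linarith
    have h2 : n - 1 ≠ 0 := by linarith
    have h3 : m - 1 ≠ 0 := by linarith
    have h4 : n ≠ 0 := by linarith
    have h5 := h.hK.ne'
    have h6 := hm.ne
    have h7 := hbeta.ne
    have h8 := hp.ne'
    have h9 := hB.ne'
    rw [e1, e2]
    unfold Acoef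
    generalize n * (1 - beta) - m * (1 + beta) = W
    have h3' : m - 1 = -(1 - m) := by ring
    rw [h3']
    field_simp
  have hbase : 0 ≤ -((n - 1) * (n * (1 - beta) - m * (1 + beta))) / (2 * m * (m - 1) * beta) := by
    rw [base]; positivity
  have hg0 : 0 ≤ gothC n m beta := Real.rpow_nonneg hbase _
  rw [← Real.rpow_left_inj (mul_nonneg hg0 hc0.le) Zf_pos.le hp.ne', h.Zf_rpow h.hKc.le h.c_lt,
    Real.mul_rpow hg0 hc0.le, ← base]
  congr 1
  unfold gothC
  rw [← Real.rpow_mul hbase, one_div_mul_cancel hp.ne', Real.rpow_one]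

theorem stmt_15 (sigma b r K beta n m : ℝ)
    (hsigma : sigma ≠ 0) (hr : 0 < r) (hbr : b < r) (hK : 0 < K)
    (hb1 : -1 < beta) (hb2 : beta < 1) (hbne : beta ≠ 0)
    (hm : m < 0) (hn : 0 < n)
    (hmroot : 1 / 2 * sigma ^ 2 * m ^ 2 + (b - 1 / 2 * sigma ^ 2) * m - r = 0)
    (hnroot : 1 / 2 * sigma ^ 2 * n ^ 2 + (b - 1 / 2 * sigma ^ 2) * n - r = 0)
    (hb : 0 < b)
    (hconv : (n - 1) * (1 - beta) - 2 * m * beta < 0)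
    (alpha : ℝ → ℝ)
    (halpha : ∀ z ∈ Set.Ioo (0 : ℝ) (gothC n m beta * zcrit r b K),
      alpha z ∈ Set.Ioo (zcrit r b K) (zzero n K) ∧ Ffun n m beta K z (alpha z) = 0) :
    ∃ zo : ℝ,
      (zo ∈ Set.Ioo K (gothC n m beta * zcrit r b K) ∧
        (∀ z ∈ Set.Ioo (0 : ℝ) zo,
          0 < (alpha z - K) / psi n m beta z (alpha z) - (z - K) / z ^ n) ∧
        (∀ z ∈ Set.Ioo zo (gothC n m beta * zcrit r b K),
          (alpha z - K) / psi n m beta z (alpha z) - (z - K) / z ^ n < 0)) ∧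
      (∀ zo' : ℝ,
        (zo' ∈ Set.Ioo K (gothC n m beta * zcrit r b K) ∧
          (∀ z ∈ Set.Ioo (0 : ℝ) zo',
            0 < (alpha z - K) / psi n m beta z (alpha z) - (z - K) / z ^ n) ∧
          (∀ z ∈ Set.Ioo zo' (gothC n m beta * zcrit r b K),
            (alpha z - K) / psi n m beta z (alpha z) - (z - K) / z ^ n < 0)) → zo' = zo) ∧
      (∀ z ∈ Set.Ioc (0 : ℝ) zo, ∀ x ∈ Set.Ioc (0 : ℝ) (alpha z),
        0 ≤ (alpha z - K) / psi n m beta z (alpha z) - (x - K) / psi n m beta z x) ∧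
      (∃ zfrak : ℝ → ℝ,
        (∀ z ∈ Set.Ico zo (gothC n m beta * zcrit r b K),
          zfrak z ∈ Set.Ico zo (zcrit r b K)) ∧
        zfrak zo = zo ∧
        (∀ z ∈ Set.Ioo zo (gothC n m beta * zcrit r b K),
          z < zfrak z ∧
          (alpha z - K) / psi n m beta z (alpha z)
            - (zfrak z - K) / psi n m beta z (zfrak z) = 0)) := by
  obtain ⟨hbeta, h⟩ := params_of sigma b r K beta n m hsigma hbr hK hb1 hb2 hm hn hmroot hnroot
    hb hconv
  have hgc := gothC_eq hb1 hbeta h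
  have hBc : ∀ z, Bcoef n m beta z
      = -((-(2 * n * beta) / ((n - m) * (1 + beta))) * z ^ (n - m)) := by
    intro z; unfold Bcoef; ring
  generalize hGdef : -(2 * n * beta) / ((n - m) * (1 + beta)) = G at *
  rw [hgc] at halpha ⊢
  have hpsiR : ∀ z x, 0 < z → z ≤ x →
      psi n m beta z x = psiR n m (Acoef n m beta) G z x := by
    intro z x hz hx
    unfold psi
    split_ifs with hxz
    · obtain rfl : x = z := le_antisymm hxz hx
      rw [h.psiR_self hz]
    · rw [hBc]; unfold psiR; ring
  have hFR : ∀ z x, Ffun n m beta K z x = FR n m K (Acoef n m beta) G z x := by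
    intro z x
    unfold Ffun FR Nf Df
    rw [hBc]; ring
  generalize Acoef n m beta = A at *
  generalize zcrit r b K = c at *
  have hn1 := h.hn
  -- facts on `α(z)` in terms of `Z`
  have hal : ∀ z ∈ Ioo (0 : ℝ) (Zf n m K A G c),
      c < alpha z ∧ 0 < Nf n K (alpha z) ∧ Zf n m K A G (alpha z) = z := by
    intro z hz
    obtain ⟨⟨h1, h2⟩, h3⟩ := halpha z hz
    have hN : 0 < Nf n K (alpha z) := by
      unfold zzero at h2
      rw [lt_div_iff₀ (by linarith)] at h2
      unfold Nf; linarith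
    rw [hFR] at h3
    exact ⟨h1, hN, h.Zf_of_FR hz.1 (h.hKc.trans h1).le hN h3⟩
  have hZc : Zf n m K A G c < c := h.Zf_c_lt
  have hval : ∀ z ∈ Ioo (0 : ℝ) (Zf n m K A G c),
      psi n m beta z (alpha z) = psiR n m A G z (alpha z) := by
    intro z hz
    exact hpsiR z _ hz.1 ((hz.2.trans hZc).trans (hal z hz).1).le
  have hP : ∀ z ∈ Ioo (0 : ℝ) (Zf n m K A G c),
      (alpha z - K) / psi n m beta z (alpha z) - (z - K) / z ^ n = Pf n m K A G (alpha z) := by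
    intro z hz
    obtain ⟨h1, h2, h3⟩ := hal z hz
    rw [hval z hz, ← h.Pf_eq (h.hKc.trans h1) h2, h3]
  -- the crossing point lies between `𝔷_c` and `α(K)`
  obtain ⟨hk1, hk2, hk3⟩ := hal K ⟨hK, h.K_lt_Zf_c⟩
  have hcont : ContinuousOn (Pf n m K A G) (Icc c (alpha K)) := fun x hx =>
    (h.Pf_cont (h.hKc.le.trans hx.1) (h.Nf_anti hx.2 hk2)).continuousWithinAt
  obtain ⟨a, ⟨hca, haK⟩, ha0⟩ := intermediate_value_Ioo hk1.le hcont
    ⟨h.Pf_c_neg, h.Pf_pos (h.hKc.trans hk1) hk3.le⟩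
  have haN := h.Nf_anti haK.le hk2
  have hzoK : K < Zf n m K A G a := by
    have := h.Zf_anti hca.le haK hk2
    rwa [hk3] at this
  have hzoc : Zf n m K A G a < Zf n m K A G c := h.Zf_anti le_rfl hca haN
  have hlt_of : ∀ x y, c < x → 0 < Nf n K x → c < y →
      Zf n m K A G y < Zf n m K A G x → x < y := by
    intro x y hx hNx hy hlt
    by_contra hcon
    rcases (not_lt.1 hcon).eq_or_lt with e | e
    · rw [e] at hlt; exact lt_irrefl _ hlt
    · exact lt_asymm hlt (h.Zf_anti hy.le e hNx)
  set zo := Zf n m K A G a with hzo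
  have hzo0 : 0 < zo := Zf_pos
  have hazo : alpha zo = a := by
    obtain ⟨h1, h2, h3⟩ := hal zo ⟨hzo0, hzoc⟩
    rcases lt_trichotomy (alpha zo) a with e | e | e
    · exact absurd h3 (h.Zf_anti h1.le e haN).ne'
    · exact e
    · exact absurd h3 (h.Zf_anti hca.le e h2).ne
  have hpos : ∀ z ∈ Ioo (0 : ℝ) zo,
      0 < (alpha z - K) / psi n m beta z (alpha z) - (z - K) / z ^ n := by
    intro z hz
    have hz' : z ∈ Ioo (0 : ℝ) (Zf n m K A G c) := ⟨hz.1, hz.2.trans hzoc⟩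
    obtain ⟨h1, h2, h3⟩ := hal z hz'
    rw [hP z hz']
    rcases le_or_gt z K with hzK | hzK
    · exact h.Pf_pos (h.hKc.trans h1) (by rw [h3]; exact hzK)
    · exact (h.Pf_crossing hca (hlt_of a _ hca haN h1 (by rw [h3]; exact hz.2)) h2
        (by rw [h3]; exact hzK)).1 ha0
  have hneg : ∀ z ∈ Ioo zo (Zf n m K A G c),
      (alpha z - K) / psi n m beta z (alpha z) - (z - K) / z ^ n < 0 := by
    intro z hz
    have hz' : z ∈ Ioo (0 : ℝ) (Zf n m K A G c) := ⟨hzo0.trans hz.1, hz.2⟩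
    obtain ⟨h1, h2, h3⟩ := hal z hz'
    rw [hP z hz']
    exact (h.Pf_crossing h1 (hlt_of _ a h1 h2 hca (by rw [h3]; exact hz.1)) haN hzoK).2 ha0
  refine ⟨zo, ⟨⟨hzoK, hzoc⟩, hpos, hneg⟩, ?_, ?_, ?_⟩
  · rintro zo' ⟨⟨hK', hc'⟩, hpos', hneg'⟩
    rcases lt_trichotomy zo' zo with e | e | e
    · obtain ⟨w, hw1, hw2⟩ := exists_between e
      exact absurd (hpos w ⟨(hK.trans hK').trans hw1, hw2⟩)
        (hneg' w ⟨hw1, hw2.trans hzoc⟩).not_gt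
    · exact e
    · obtain ⟨w, hw1, hw2⟩ := exists_between e
      exact absurd (hpos' w ⟨hzo0.trans hw1, hw2⟩) (hneg w ⟨hw1, hw2.trans hc'⟩).not_gt
  · intro z hz x hx
    have hz' : z ∈ Ioo (0 : ℝ) (Zf n m K A G c) := ⟨hz.1, hz.2.trans_lt hzoc⟩
    obtain ⟨h1, h2, h3⟩ := hal z hz'
    have hend : 0 ≤ (alpha z - K) / psi n m beta z (alpha z) - (z - K) / z ^ n := by
      rcases hz.2.eq_or_lt with e | e
      · rw [hP z hz', e, hazo, ha0]
      · exact (hpos z ⟨hz.1, e⟩).le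
    rcases le_or_gt x z with hxz | hxz
    · have hNz := h.Nf_anti ((hz'.2.trans hZc).trans h1).le h2
      have := h.pow_ratio_mono hx.1 hxz hNz
      have e : psi n m beta z x = x ^ n := by unfold psi; rw [if_pos hxz]
      rw [e]
      linarith
    · rw [hval z hz'] at hend ⊢
      rw [hpsiR z x hz.1 hxz.le]
      have := h.ratio_le hz.1 h1 h2 h3 hxz.le hx.2 (by linarith)
      linarith
  · have hex : ∀ z, ∃ y, z ∈ Ioo zo (Zf n m K A G c) → z < y ∧ y < c ∧
        (alpha z - K) / psi n m beta z (alpha z) - (y - K) / psi n m beta z y = 0 := by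
      intro z
      by_cases hz : z ∈ Ioo zo (Zf n m K A G c)
      · have hz' : z ∈ Ioo (0 : ℝ) (Zf n m K A G c) := ⟨hzo0.trans hz.1, hz.2⟩
        obtain ⟨h1, h2, h3⟩ := hal z hz'
        have hn' := hneg z hz
        rw [hval z hz'] at hn' ⊢
        obtain ⟨y, hy1, hy2, hy3⟩ := h.exists_level hz'.1 h1 h2 h3 (by linarith)
        refine ⟨y, fun _ => ⟨hy1, hy2, ?_⟩⟩
        rw [hpsiR z y hz'.1 hy1.le, hy3, sub_self]
      · exact ⟨0, fun hz' => absurd hz' hz⟩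
    choose y hy using hex
    have hyzo : ∀ z ∈ Ioo zo (Zf n m K A G c), Function.update y zo zo z = y z := fun z hz =>
      Function.update_of_ne hz.1.ne' _ _
    refine ⟨Function.update y zo zo, ?_, Function.update_self _ _ _, ?_⟩
    · intro z hz
      rcases hz.1.eq_or_lt with e | e
      · rw [← e, Function.update_self]
        exact ⟨le_rfl, hzoc.trans hZc⟩
      · rw [hyzo z ⟨e, hz.2⟩]
        obtain ⟨h1, h2, -⟩ := hy z ⟨e, hz.2⟩
        exact ⟨(e.trans h1).le, h2⟩
    · intro z hz
      rw [hyzo z hz]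
      exact ⟨(hy z hz).1, (hy z hz).2.2⟩
end
end

section
/- Suppose β ∈ (0,1), and for z > 0 let α(z) denote the unique zero of F(·;z) in (min(z,𝔷_0), ∞). Then there exists a unique point z_⊕ ∈ (𝔷_0, ∞) such that the quantity g(𝔷_0, z) = (α(z) − K)/ψ(α(z);z) − (𝔷_0 − K)/ψ(𝔷_0;z) is strictly positive for all z ∈ (0, z_⊕) and strictly negative for all z ∈ (z_⊕, ∞). Moreover, for every z ∈ (0, z_⊕] and every x ∈ (0, α(z)], (α(z) − K)/ψ(α(z);z) ≥ (x − K)/ψ(x;z). -/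
/-!
The derivative of `(x - K) / (A x^n + B x^m)` has the sign of `-F(x)`. Since `F(·;z)` is negative
at `𝔷_0` and positive near infinity, its only zero `α(z)` lies beyond `𝔷_0` and is the maximiser on
`[min z 𝔷_0, ∞)` of the quotient `h z` formed with the upper branch of `psi` (`signF_signs`). The
quotient `k x = (x - K) / x^n` of the lower branch is maximal at `𝔷_0`.

For `z < 𝔷_0` both points lie on the upper branch, so `g > 0`. For `z ≥ 𝔷_0` the sign of `g` is that
of `max h z - k 𝔷_0`: as `β > 0`, the lower branch is the smaller one (`rpow_le_branch`), so
`max h z` is at most the value at `α(z)`, with equality unless `α(z) < z`, in which case that value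
is `k (α z) < k 𝔷_0`. The dependence on `z` is only through the increasing coefficient `B(z)`, and
`max h z` crosses the level `k 𝔷_0` at exactly one value of `B` (`exists_threshold`), which
determines `z_⊕`. The last claim follows from the two maximality properties and from `g ≥ 0` at all
`z ∈ [𝔷_0, z_⊕]`, which forces `α(z) > z` there.
-/

open Set Filter Topology

noncomputable section

/-- The reward-to-cost quotient `(x - K) / (a x^n + b x^m)`. -/
def quot (n m K a b x : ℝ) : ℝ := (x - K) / (a * x ^ n + b * x ^ m)

/-- The function `Ffun` with its two coefficients as free parameters. -/
def signF (n m K a b x : ℝ) : ℝ :=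
  ((n - 1) * x - n * K) * a * x ^ (n - m) + ((m - 1) * x - m * K) * b

lemma den_pos {n m a b x : ℝ} (ha : 0 < a) (hb : 0 ≤ b) (hx : 0 < x) :
    0 < a * x ^ n + b * x ^ m := by
  have := Real.rpow_pos_of_pos hx n
  have := Real.rpow_pos_of_pos hx m
  positivity

lemma hasDerivAt_quot {n m K a b x : ℝ} (ha : 0 < a) (hb : 0 ≤ b) (hx : 0 < x) :
    HasDerivAt (quot n m K a b)
      (-(x ^ (m - 1) * signF n m K a b x) / (a * x ^ n + b * x ^ m) ^ 2) x := by
  have h1 : HasDerivAt (fun y : ℝ => y - K) 1 x := (hasDerivAt_id x).sub_const K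
  have h2 : HasDerivAt (fun y : ℝ => a * y ^ n + b * y ^ m)
      (a * (n * x ^ (n - 1)) + b * (m * x ^ (m - 1))) x :=
    ((Real.hasDerivAt_rpow_const (Or.inl hx.ne')).const_mul a).add
      ((Real.hasDerivAt_rpow_const (Or.inl hx.ne')).const_mul b)
  have h3 := h1.div h2 (den_pos ha hb hx).ne'
  refine h3.congr_deriv ?_
  congr 1
  have e1 : x ^ n = x * (x ^ (m - 1) * x ^ (n - m)) := by
    rw [mul_comm, ← Real.rpow_add hx, ← Real.rpow_add_one hx.ne']; ring_nf
  have e2 : x ^ m = x * x ^ (m - 1) := by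
    rw [mul_comm, ← Real.rpow_add_one hx.ne']; ring_nf
  have e3 : x ^ (n - 1) = x ^ (m - 1) * x ^ (n - m) := by
    rw [← Real.rpow_add hx]; ring_nf
  rw [e1, e2, e3]
  unfold signF
  ring

lemma quot_strictMonoOn {n m K a b : ℝ} {D : Set ℝ} (ha : 0 < a) (hb : 0 ≤ b)
    (hD : Convex ℝ D) (hpos : ∀ x ∈ D, 0 < x)
    (hF : ∀ x ∈ interior D, signF n m K a b x < 0) :
    StrictMonoOn (quot n m K a b) D := by
  refine strictMonoOn_of_deriv_pos hD
    (fun x hx => (hasDerivAt_quot ha hb (hpos x hx)).continuousAt.continuousWithinAt) ?_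
  intro x hx
  have hx0 := hpos x (interior_subset hx)
  rw [(hasDerivAt_quot ha hb hx0).deriv]
  have h1 := Real.rpow_pos_of_pos hx0 (m - 1)
  have h2 := den_pos (n := n) (m := m) ha hb hx0
  have h3 := mul_neg_of_pos_of_neg h1 (hF x hx)
  exact div_pos (by linarith) (by positivity)

lemma quot_strictAntiOn {n m K a b : ℝ} {D : Set ℝ} (ha : 0 < a) (hb : 0 ≤ b)
    (hD : Convex ℝ D) (hpos : ∀ x ∈ D, 0 < x)
    (hF : ∀ x ∈ interior D, 0 < signF n m K a b x) :
    StrictAntiOn (quot n m K a b) D := by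
  refine strictAntiOn_of_deriv_neg hD
    (fun x hx => (hasDerivAt_quot ha hb (hpos x hx)).continuousAt.continuousWithinAt) ?_
  intro x hx
  have hx0 := hpos x (interior_subset hx)
  rw [(hasDerivAt_quot ha hb hx0).deriv]
  have h1 := Real.rpow_pos_of_pos hx0 (m - 1)
  have h2 := den_pos (n := n) (m := m) ha hb hx0
  have h3 := mul_pos h1 (hF x hx)
  exact div_neg_of_neg_of_pos (by linarith) (by positivity)

lemma zzero_gt {n K : ℝ} (hn : 1 < n) (hK : 0 < K) : K < zzero n K := by
  unfold zzero
  rw [lt_div_iff₀ (by linarith)]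
  nlinarith

lemma zzero_mul {n K : ℝ} (hn : 1 < n) : (n - 1) * zzero n K = n * K := by
  have : n - 1 ≠ 0 := by linarith
  unfold zzero
  field_simp

lemma signF_continuousOn (n m K a b : ℝ) : ContinuousOn (signF n m K a b) (Ioi 0) := by
  intro x hx
  have : ContinuousAt (fun y : ℝ => y ^ (n - m)) x :=
    Real.continuousAt_rpow_const _ _ (Or.inl (ne_of_gt hx))
  unfold signF
  exact ContinuousAt.continuousWithinAt (by fun_prop)

lemma signF_zzero_neg {n m K a b : ℝ} (hn : 1 < n) (hm : m < 0) (hK : 0 < K) (hb : 0 < b) :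
    signF n m K a b (zzero n K) < 0 := by
  have h1 := zzero_gt hn hK
  have h2 := zzero_mul (K := K) hn
  unfold signF
  rw [h2]
  have : (m - 1) * zzero n K - m * K < 0 := by nlinarith
  nlinarith

lemma signF_eventually_pos {n m K a b : ℝ} (hn : 1 < n) (hm : m < 0) (hK : 0 < K)
    (ha : 0 < a) (hb : 0 < b) : ∀ᶠ x in atTop, 0 < signF n m K a b x := by
  have ht := tendsto_rpow_atTop (show 0 < n - m by linarith)
  filter_upwards [ht.eventually_gt_atTop (2 * (1 - m) * b / ((n - 1) * a)),
    eventually_gt_atTop (2 * n * K / (n - 1)), eventually_gt_atTop 0] with x h1 h2 h3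
  have hn1 : 0 < n - 1 := by linarith
  rw [div_lt_iff₀ (by positivity)] at h1
  rw [div_lt_iff₀ hn1] at h2
  have hp := Real.rpow_pos_of_pos h3 (n - m)
  unfold signF
  have h4 : (n - 1) / 2 * x * (a * x ^ (n - m)) ≤ ((n - 1) * x - n * K) * (a * x ^ (n - m)) :=
    mul_le_mul_of_nonneg_right (by linarith) (by positivity)
  have h5 : x * (2 * (1 - m) * b) < x * (x ^ (n - m) * ((n - 1) * a)) :=
    mul_lt_mul_of_pos_left h1 h3
  have h6 : 0 < -m * K * b := by
    have : 0 < -m := by linarith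
    positivity
  nlinarith

/-- If `al` is the only zero of `signF` in `(l, ∞)` and `l ≤ 𝔷_0`, then `al` lies beyond `𝔷_0`
and `signF` changes sign from negative to positive there. -/
lemma signF_signs {n m K a b l al : ℝ} (hn : 1 < n) (hm : m < 0) (hK : 0 < K)
    (ha : 0 < a) (hb : 0 < b) (hl : 0 < l) (hlz : l ≤ zzero n K)
    (huniq : ∀ x ∈ Ioi l, signF n m K a b x = 0 → x = al) :
    zzero n K < al ∧ (∀ x ∈ Ioo l al, signF n m K a b x < 0) ∧
      (∀ x, al < x → 0 < signF n m K a b x) := by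
  have hz0 : 0 < zzero n K := hK.trans (zzero_gt hn hK)
  have hneg := signF_zzero_neg (a := a) hn hm hK hb
  have hc := signF_continuousOn n m K a b
  -- A sign change produces a zero, which `huniq` identifies with `al` when it exceeds `l`.
  have cross1 : ∀ x y, 0 < x → x < y → signF n m K a b x < 0 → 0 < signF n m K a b y →
      ∃ w ∈ Ioo x y, signF n m K a b w = 0 := fun x y hx hxy h1 h2 =>
    intermediate_value_Ioo hxy.le
      (hc.mono fun w hw => lt_of_lt_of_le hx hw.1) ⟨h1, h2⟩
  have cross2 : ∀ x y, 0 < x → x < y → 0 < signF n m K a b x → signF n m K a b y < 0 →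
      ∃ w ∈ Ioo x y, signF n m K a b w = 0 := fun x y hx hxy h1 h2 =>
    intermediate_value_Ioo' hxy.le
      (hc.mono fun w hw => lt_of_lt_of_le hx hw.1) ⟨h2, h1⟩
  have hev := signF_eventually_pos hn hm hK ha hb
  have hal : zzero n K < al := by
    obtain ⟨y, hy, hyz⟩ := (hev.and (eventually_gt_atTop (zzero n K))).exists
    obtain ⟨w, hw, hw0⟩ := cross1 _ y hz0 hyz hneg hy
    rw [← huniq w (lt_of_le_of_lt hlz hw.1) hw0]
    exact hw.1
  refine ⟨hal, ?_, ?_⟩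
  · intro x hx
    by_contra! h
    rcases h.eq_or_lt with h | h
    · exact hx.2.ne (huniq x hx.1 h.symm)
    rcases lt_trichotomy x (zzero n K) with hxz | hxz | hxz
    · obtain ⟨w, hw, hw0⟩ := cross2 x _ (hl.trans hx.1) hxz h hneg
      have := huniq w (hx.1.trans hw.1) hw0
      linarith [hw.2]
    · rw [hxz] at h; linarith
    · obtain ⟨w, hw, hw0⟩ := cross1 _ x hz0 hxz hneg h
      have := huniq w (lt_of_le_of_lt hlz hw.1) hw0
      linarith [hw.2, hx.2]
  · intro x hx
    have hlx : l < x := by linarith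
    by_contra! h
    rcases h.eq_or_lt with h | h
    · exact hx.ne' (huniq x hlx h)
    obtain ⟨y, hy, hyx⟩ := (hev.and (eventually_gt_atTop x)).exists
    obtain ⟨w, hw, hw0⟩ := cross1 x y (hl.trans hlx) hyx h hy
    have := huniq w (hlx.trans hw.1) hw0
    linarith [hw.1]

/-- The coefficient `Bs` is the critical value of `B` at which the supremum over `[z0, ∞)` of
`(x - K) / (a x^n + B x^m)` crosses the level `c`. -/
lemma exists_threshold {n m K a c z0 B0 x0 : ℝ} (hn : 1 < n) (hm : m < 0) (hK : 0 < K)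
    (ha : 0 < a) (hc : 0 < c) (hz0 : 0 < z0) (hB0 : 0 < B0) (hx0 : z0 ≤ x0)
    (h0 : c * (a * x0 ^ n + B0 * x0 ^ m) < x0 - K) :
    ∃ Bs, B0 < Bs ∧
      (∀ B, B < Bs → ∃ x, z0 ≤ x ∧ c * (a * x ^ n + B * x ^ m) < x - K) ∧
      (∀ B, Bs < B → ∀ x, z0 ≤ x → x - K < c * (a * x ^ n + B * x ^ m)) ∧
      (∀ M, 0 < M → (∀ x, z0 ≤ x → x - K ≤ M * (a * x ^ n + Bs * x ^ m)) → c ≤ M) := by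
  set S : Set ℝ := {B | ∃ x, z0 ≤ x ∧ c * (a * x ^ n + B * x ^ m) ≤ x - K} with hS
  have hn1 : 0 < n - 1 := by linarith
  have hbdd : BddAbove S := by
    -- On `S` the term `c a x^n ≤ x` bounds `x`, and then `c B x^m ≤ x` bounds `B`.
    set X : ℝ := (1 / (c * a)) ^ (1 / (n - 1)) with hX
    refine ⟨max 0 (X ^ (1 - m) / c), ?_⟩
    rintro B ⟨x, hx, hle⟩
    rcases le_or_gt B 0 with hB | hB
    · exact le_max_of_le_left hB
    refine le_max_of_le_right ?_
    have hxp : 0 < x := hz0.trans_le hx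
    have p1 := Real.rpow_pos_of_pos hxp n
    have p2 := Real.rpow_pos_of_pos hxp m
    have e1 : x ^ n = x ^ (n - 1) * x := by
      rw [← Real.rpow_add_one hxp.ne']; ring_nf
    have e2 : x ^ (1 - m) * x ^ m = x := by
      rw [← Real.rpow_add hxp]; simp
    have q1 : 0 < c * (a * x ^ n) := by positivity
    have q2 : 0 < c * (B * x ^ m) := by positivity
    have hxX : x ≤ X := by
      rw [hX, one_div (n - 1), Real.le_rpow_inv_iff_of_pos hxp.le (by positivity) hn1,
        le_div_iff₀ (by positivity)]
      refine le_of_mul_le_mul_right ?_ hxp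
      rw [e1] at hle
      nlinarith
    have : x ^ (1 - m) ≤ X ^ (1 - m) := Real.rpow_le_rpow hxp.le hxX (by linarith)
    refine le_trans ?_ (div_le_div_of_nonneg_right this hc.le)
    rw [le_div_iff₀ hc]
    refine le_of_mul_le_mul_right ?_ p2
    rw [e2]
    nlinarith
  have hx0p : 0 < x0 := hz0.trans_le hx0
  have px0 := Real.rpow_pos_of_pos hx0p m
  set B1 : ℝ := B0 + (x0 - K - c * (a * x0 ^ n + B0 * x0 ^ m)) / (c * x0 ^ m) with hB1
  have hB1S : B1 ∈ S := by
    refine ⟨x0, hx0, le_of_eq ?_⟩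
    rw [hB1]
    field_simp
    ring
  have hB01 : B0 < B1 := by
    have : 0 < (x0 - K - c * (a * x0 ^ n + B0 * x0 ^ m)) / (c * x0 ^ m) :=
      div_pos (by linarith) (by positivity)
    linarith
  have hBs : B0 < sSup S := hB01.trans_le (le_csSup hbdd hB1S)
  refine ⟨sSup S, hBs, ?_, ?_, ?_⟩
  · intro B hB
    obtain ⟨B2, ⟨x, hx, hle⟩, hlt⟩ := exists_lt_of_lt_csSup ⟨B1, hB1S⟩ hB
    refine ⟨x, hx, lt_of_lt_of_le ?_ hle⟩
    have := Real.rpow_pos_of_pos (hz0.trans_le hx) m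
    gcongr
  · intro B hB x hx
    by_contra! h
    exact absurd (le_csSup hbdd (show B ∈ S from ⟨x, hx, h⟩)) (not_le.2 hB)
  · intro M hM h
    by_contra! hlt
    -- A level `M < c` would make `(M / c) * sSup S < sSup S` an upper bound of `S`.
    have hub : sSup S ≤ M / c * sSup S := by
      refine csSup_le ⟨B1, hB1S⟩ ?_
      rintro B ⟨x, hx, hle⟩
      have h1 := h x hx
      have hxp := hz0.trans_le hx
      have p1 := Real.rpow_pos_of_pos hxp n
      have p2 := Real.rpow_pos_of_pos hxp m
      rw [div_mul_eq_mul_div, le_div_iff₀ hc]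
      refine le_of_mul_le_mul_right ?_ p2
      have : M * (a * x ^ n) ≤ c * (a * x ^ n) :=
        mul_le_mul_of_nonneg_right hlt.le (by positivity)
      nlinarith
    have : M / c < 1 := (div_lt_one hc).2 hlt
    nlinarith

lemma one_lt_root {sigma b r n : ℝ} (hsigma : sigma ≠ 0) (hr : 0 < r) (hbr : b < r) (hn : 0 < n)
    (h : 1 / 2 * sigma ^ 2 * n ^ 2 + (b - 1 / 2 * sigma ^ 2) * n - r = 0) : 1 < n := by
  by_contra! hle
  have hs : 0 < sigma ^ 2 := by positivity
  have h1 : 0 ≤ sigma ^ 2 * (n * (1 - n)) :=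
    mul_nonneg hs.le (mul_nonneg hn.le (by linarith))
  nlinarith [mul_pos hn (sub_pos.2 hbr), mul_nonneg hr.le (sub_nonneg.2 hle)]

/-- The two formulas for `psi` agree at `x = z` because the coefficients sum to one. -/
lemma Acoef_add {n m beta : ℝ} (hn : 1 < n) (hm : m < 0) (hbpos : 0 < beta) :
    Acoef n m beta + 2 * n * beta / ((n - m) * (1 + beta)) = 1 := by
  have h1 : n - m ≠ 0 := by linarith
  have h2 : 1 + beta ≠ 0 := by linarith
  unfold Acoef
  field_simp
  ring

lemma Acoef_pos {n m beta : ℝ} (hn : 1 < n) (hm : m < 0) (hb2 : beta < 1) (hbpos : 0 < beta) :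
    0 < Acoef n m beta := by
  unfold Acoef
  have h1 : 0 < n - m := by linarith
  have h2 : 0 < 1 - beta := by linarith
  have h3 : 0 < -m := by linarith
  have h4 : 0 < n * (1 - beta) := by positivity
  have h5 : 0 < -m * (1 + beta) := by positivity
  exact div_pos (by linarith) (by positivity)

lemma Bcoef_eq (n m beta z : ℝ) :
    Bcoef n m beta z = 2 * n * beta / ((n - m) * (1 + beta)) * z ^ (n - m) := by
  unfold Bcoef; ring

/-- For `β > 0` the power `x^n` is the smaller of the two branches of `psi` on `(0, z]`. -/
lemma rpow_le_branch {n m beta z x : ℝ} (hn : 1 < n) (hm : m < 0) (hbpos : 0 < beta)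
    (hx : 0 < x) (hxz : x ≤ z) :
    x ^ n ≤ Acoef n m beta * x ^ n + Bcoef n m beta z * x ^ m := by
  have hnm : 0 < n - m := by linarith
  have h1 : x ^ (n - m) ≤ z ^ (n - m) := Real.rpow_le_rpow hx.le hxz hnm.le
  have e : x ^ n = x ^ (n - m) * x ^ m := by rw [← Real.rpow_add hx]; ring_nf
  have hA := Acoef_add hn hm hbpos
  have hc : 0 < 2 * n * beta / ((n - m) * (1 + beta)) := by positivity
  rw [Bcoef_eq]
  set c := 2 * n * beta / ((n - m) * (1 + beta))
  have p := Real.rpow_pos_of_pos hx m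
  have h2 : c * x ^ (n - m) * x ^ m ≤ c * z ^ (n - m) * x ^ m := by gcongr
  have h3 : x ^ n = Acoef n m beta * x ^ n + c * x ^ (n - m) * x ^ m := by
    rw [mul_assoc, ← e, ← add_mul, hA, one_mul]
  linarith

lemma branch_self {n m beta z : ℝ} (hn : 1 < n) (hm : m < 0) (hbpos : 0 < beta) (hz : 0 < z) :
    Acoef n m beta * z ^ n + Bcoef n m beta z * z ^ m = z ^ n := by
  have e : z ^ n = z ^ (n - m) * z ^ m := by rw [← Real.rpow_add hz]; ring_nf
  rw [Bcoef_eq, mul_assoc, ← e, ← add_mul, Acoef_add hn hm hbpos, one_mul]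

theorem stmt_16 (sigma b r K beta n m : ℝ)
    (hsigma : sigma ≠ 0) (hr : 0 < r) (hbr : b < r) (hK : 0 < K)
    (hb1 : -1 < beta) (hb2 : beta < 1) (hbne : beta ≠ 0)
    (hm : m < 0) (hn : 0 < n)
    (hmroot : 1 / 2 * sigma ^ 2 * m ^ 2 + (b - 1 / 2 * sigma ^ 2) * m - r = 0)
    (hnroot : 1 / 2 * sigma ^ 2 * n ^ 2 + (b - 1 / 2 * sigma ^ 2) * n - r = 0)
    (hbpos : 0 < beta)
    (alpha : ℝ → ℝ)
    (halpha : ∀ z, 0 < z →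
      alpha z ∈ Set.Ioi (min z (zzero n K)) ∧ Ffun n m beta K z (alpha z) = 0 ∧
      (∀ x ∈ Set.Ioi (min z (zzero n K)), Ffun n m beta K z x = 0 → x = alpha z)) :
    ∃ zp : ℝ,
      (zzero n K < zp ∧
        (∀ z ∈ Set.Ioo (0 : ℝ) zp,
          0 < (alpha z - K) / psi n m beta z (alpha z)
            - (zzero n K - K) / psi n m beta z (zzero n K)) ∧
        (∀ z, zp < z →
          (alpha z - K) / psi n m beta z (alpha z)
            - (zzero n K - K) / psi n m beta z (zzero n K) < 0)) ∧
      (∀ zp' : ℝ,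
        (zzero n K < zp' ∧
          (∀ z ∈ Set.Ioo (0 : ℝ) zp',
            0 < (alpha z - K) / psi n m beta z (alpha z)
              - (zzero n K - K) / psi n m beta z (zzero n K)) ∧
          (∀ z, zp' < z →
            (alpha z - K) / psi n m beta z (alpha z)
              - (zzero n K - K) / psi n m beta z (zzero n K) < 0)) → zp' = zp) ∧
      (∀ z ∈ Set.Ioc (0 : ℝ) zp, ∀ x ∈ Set.Ioc (0 : ℝ) (alpha z),
        (x - K) / psi n m beta z x ≤ (alpha z - K) / psi n m beta z (alpha z)) := by
  have hn1 : 1 < n := one_lt_root hsigma hr hbr hn hnroot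
  have hKz0 : K < zzero n K := zzero_gt hn1 hK
  set z0 := zzero n K with hz0def
  have hz0 : 0 < z0 := hK.trans hKz0
  set A := Acoef n m beta with hAdef
  have hA : 0 < A := Acoef_pos hn1 hm hb2 hbpos
  have hnm : 0 < n - m := by linarith
  set c := 2 * n * beta / ((n - m) * (1 + beta)) with hcdef
  have hc : 0 < c := by positivity
  have hBeq : ∀ z, Bcoef n m beta z = c * z ^ (n - m) := Bcoef_eq n m beta
  have hBpos : ∀ z, 0 < z → 0 < Bcoef n m beta z := fun z hz => by
    rw [hBeq]; have := Real.rpow_pos_of_pos hz (n - m); positivity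
  have hBmono : ∀ y z, 0 < y → y < z → Bcoef n m beta y < Bcoef n m beta z :=
    fun y z hy hyz => by
      rw [hBeq, hBeq]
      exact mul_lt_mul_of_pos_left (Real.rpow_lt_rpow hy.le hyz hnm) hc
  -- The quotient `k x = (x - K) / x^n` increases up to `z0` and decreases afterwards.
  set k : ℝ → ℝ := fun x => (x - K) / x ^ n with hk
  have hkq : quot n m K 1 0 = k := by
    funext x; simp [quot, hk]
  have hzm : (n - 1) * z0 = n * K := zzero_mul hn1
  have hkF : ∀ x, signF n m K 1 0 x = (n - 1) * (x - z0) * x ^ (n - m) := fun x => by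
    unfold signF; rw [← hzm]; ring
  have kmono : StrictMonoOn k (Ioc 0 z0) := by
    rw [← hkq]
    refine quot_strictMonoOn one_pos le_rfl (convex_Ioc 0 z0) (fun x hx => hx.1) ?_
    intro x hx
    rw [interior_Ioc] at hx
    rw [hkF]
    have := Real.rpow_pos_of_pos hx.1 (n - m)
    exact mul_neg_of_neg_of_pos
      (mul_neg_of_pos_of_neg (by linarith) (by linarith [hx.2])) this
  have kanti : StrictAntiOn k (Ici z0) := by
    rw [← hkq]
    refine quot_strictAntiOn one_pos le_rfl (convex_Ici z0) (fun x hx => hz0.trans_le hx) ?_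
    intro x hx
    rw [interior_Ici] at hx
    rw [hkF]
    have := Real.rpow_pos_of_pos (hz0.trans hx) (n - m)
    exact mul_pos (mul_pos (by linarith) (sub_pos.2 hx)) this
  have kle : ∀ x, 0 < x → k x ≤ k z0 := fun x hx => by
    rcases le_total x z0 with h | h
    · exact kmono.monotoneOn ⟨hx, h⟩ ⟨hz0, le_rfl⟩ h
    · exact kanti.antitoneOn (mem_Ici.2 le_rfl) h h
  have hk0 : 0 < k z0 := div_pos (by linarith) (Real.rpow_pos_of_pos hz0 n)
  -- `h z` is the quotient formed with the upper branch of `psi`.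
  set h : ℝ → ℝ → ℝ := fun z x => quot n m K A (Bcoef n m beta z) x with hh
  have hden : ∀ z x, 0 < z → 0 < x → 0 < A * x ^ n + Bcoef n m beta z * x ^ m :=
    fun z x hz hx => den_pos hA (hBpos z hz).le hx
  have hsigns : ∀ z, 0 < z → z0 < alpha z ∧
      (∀ x ∈ Ioo (min z z0) (alpha z), signF n m K A (Bcoef n m beta z) x < 0) ∧
      (∀ x, alpha z < x → 0 < signF n m K A (Bcoef n m beta z) x) := fun z hz =>
    signF_signs hn1 hm hK hA (hBpos z hz) (lt_min hz hz0) (min_le_right _ _)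
      (halpha z hz).2.2
  have hmono : ∀ z, 0 < z → StrictMonoOn (h z) (Icc (min z z0) (alpha z)) := fun z hz => by
    refine quot_strictMonoOn hA (hBpos z hz).le (convex_Icc _ _)
      (fun x hx => (lt_min hz hz0).trans_le hx.1) ?_
    rw [interior_Icc]
    exact (hsigns z hz).2.1
  have hanti : ∀ z, 0 < z → StrictAntiOn (h z) (Ici (alpha z)) := fun z hz => by
    refine quot_strictAntiOn hA (hBpos z hz).le (convex_Ici _)
      (fun x hx => (hz0.trans (hsigns z hz).1).trans_le hx) ?_
    rw [interior_Ici]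
    exact (hsigns z hz).2.2
  have hmax : ∀ z, 0 < z → ∀ x, min z z0 ≤ x → h z x ≤ h z (alpha z) := fun z hz x hx => by
    have hal := (hsigns z hz).1
    rcases le_total x (alpha z) with h1 | h1
    · exact (hmono z hz).monotoneOn ⟨hx, h1⟩ ⟨(min_le_right _ _).trans hal.le, le_rfl⟩ h1
    · exact (hanti z hz).antitoneOn (mem_Ici.2 le_rfl) h1 h1
  have hself : ∀ z, 0 < z → h z z = k z := fun z hz => by
    simp only [hh, hk, quot]
    rw [hAdef, branch_self hn1 hm hbpos hz]
  set P : ℝ → ℝ → ℝ := fun z x => (x - K) / psi n m beta z x with hP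
  have hPle : ∀ z x, x ≤ z → P z x = k x := fun z x hx => by
    simp only [hP, hk, psi, if_pos hx]
  have hPgt : ∀ z x, z < x → P z x = h z x := fun z x hx => by
    simp only [hP, hh, psi, if_neg (not_le.2 hx), quot]; rfl
  have hhP : ∀ z x, 0 < z → K < x → h z x ≤ P z x := fun z x hz hx => by
    rcases le_or_gt x z with h1 | h1
    · rw [hPle z x h1]
      have hx0 := hK.trans hx
      exact div_le_div_of_nonneg_left (by linarith) (Real.rpow_pos_of_pos hx0 n)
        (rpow_le_branch hn1 hm hbpos hx0 h1)
    · rw [hPgt z x h1]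
  -- If the threshold `alpha z` is attained on the lower branch, it is beaten by `z0`.
  have hPlow : ∀ z, 0 < z → alpha z ≤ z → P z (alpha z) < k z0 := fun z hz h1 => by
    rw [hPle z _ h1]
    have := (hsigns z hz).1
    exact kanti (mem_Ici.2 le_rfl) (mem_Ici.2 this.le) this
  have hcrit : k z0 * (A * alpha z0 ^ n + Bcoef n m beta z0 * alpha z0 ^ m) < alpha z0 - K := by
    have hal := (hsigns z0 hz0).1
    have h1 : h z0 z0 < h z0 (alpha z0) :=
      hmono z0 hz0 ⟨min_le_left _ _, hal.le⟩ ⟨(min_le_left _ _).trans hal.le, le_rfl⟩ hal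
    rw [hself z0 hz0] at h1
    exact (lt_div_iff₀ (hden z0 _ hz0 (hz0.trans hal))).1 h1
  obtain ⟨Bs, hBs0, hBlt, hBgt, hBcrit⟩ := exists_threshold hn1 hm hK hA hk0 hz0 (hBpos z0 hz0)
    (hsigns z0 hz0).1.le hcrit
  have hBs : 0 < Bs := (hBpos z0 hz0).trans hBs0
  set zp : ℝ := (Bs / c) ^ (1 / (n - m)) with hzp
  have hzp0 : 0 < zp := Real.rpow_pos_of_pos (by positivity) _
  have hBzp : Bcoef n m beta zp = Bs := by
    rw [hBeq, hzp, ← Real.rpow_mul (by positivity), one_div_mul_cancel hnm.ne', Real.rpow_one]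
    field_simp
  have hz0zp : z0 < zp := by
    by_contra! h1
    rcases h1.eq_or_lt with h1 | h1
    · rw [← h1, hBzp] at hBs0; exact lt_irrefl _ hBs0
    · have := hBmono zp z0 hzp0 h1
      linarith
  have hpos_lo : ∀ z, 0 < z → z < z0 → P z z0 < P z (alpha z) := fun z hz hzz => by
    have hal := (hsigns z hz).1
    rw [hPgt z _ hzz, hPgt z _ (hzz.trans hal)]
    exact hmono z hz ⟨min_le_right _ _, hal.le⟩ ⟨(min_le_right _ _).trans hal.le, le_rfl⟩ hal
  have hpos_hi : ∀ z, z0 ≤ z → z < zp → k z0 < P z (alpha z) := fun z hzz hz => by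
    have hzpos := hz0.trans_le hzz
    obtain ⟨x, hx, hlt⟩ := hBlt _ (hBzp ▸ hBmono z zp hzpos hz)
    have h1 : k z0 < h z x := (lt_div_iff₀ (hden z x hzpos (hz0.trans_le hx))).2 hlt
    exact (h1.trans_le (hmax z hzpos x ((min_le_right _ _).trans hx))).trans_le
      (hhP z _ hzpos (hKz0.trans (hsigns z hzpos).1))
  have hneg : ∀ z, zp < z → P z (alpha z) < k z0 := fun z hz => by
    have hzpos := hzp0.trans hz
    have hal := (hsigns z hzpos).1
    rcases le_or_gt (alpha z) z with h1 | h1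
    · exact hPlow z hzpos h1
    · rw [hPgt z _ h1]
      exact (div_lt_iff₀ (hden z _ hzpos (hz0.trans hal))).2
        (hBgt _ (hBzp ▸ hBmono zp z hzp0 hz) _ hal.le)
  have hzero : k z0 ≤ P zp (alpha zp) := by
    have hal := (hsigns zp hzp0).1
    refine le_trans ?_ (hhP zp _ hzp0 (hKz0.trans hal))
    refine hBcrit _ (div_pos (by linarith) (hden zp _ hzp0 (hz0.trans hal))) ?_
    intro x hx
    have h1 := hmax zp hzp0 x ((min_le_right _ _).trans hx)
    have h2 := (div_le_iff₀ (hden zp x hzp0 (hz0.trans_le hx))).1 h1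
    rwa [hBzp] at h2
  have hG1 : ∀ z ∈ Ioo (0 : ℝ) zp, 0 < P z (alpha z) - P z z0 := fun z hz => by
    rcases lt_or_ge z z0 with h1 | h1
    · exact sub_pos.2 (hpos_lo z hz.1 h1)
    · rw [hPle z z0 h1]; exact sub_pos.2 (hpos_hi z h1 hz.2)
  have hG2 : ∀ z, zp < z → P z (alpha z) - P z z0 < 0 := fun z hz => by
    rw [hPle z z0 (hz0zp.trans hz).le]; exact sub_neg.2 (hneg z hz)
  refine ⟨zp, ⟨hz0zp, hG1, hG2⟩, ?_, ?_⟩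
  · rintro zp' ⟨h1, h2, h3⟩
    rcases lt_trichotomy zp' zp with hlt | heq | hlt
    · have hw : zp' < (zp' + zp) / 2 ∧ (zp' + zp) / 2 < zp := by constructor <;> linarith
      exact absurd (hG1 _ ⟨(hz0.trans h1).trans hw.1, hw.2⟩) (not_lt.2 (h3 _ hw.1).le)
    · exact heq
    · have hw : zp < (zp' + zp) / 2 ∧ (zp' + zp) / 2 < zp' := by constructor <;> linarith
      exact absurd (h2 _ ⟨hzp0.trans hw.1, hw.2⟩) (not_lt.2 (hG2 _ hw.1).le)
  · intro z hz x hx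
    change P z x ≤ P z (alpha z)
    have hal := (hsigns z hz.1).1
    rcases lt_or_ge z z0 with hzz | hzz
    · rw [hPgt z _ (hzz.trans hal)]
      rcases le_or_gt x z with hxz | hxz
      · rw [hPle z x hxz]
        refine (kmono.monotoneOn ⟨hx.1, hxz.trans hzz.le⟩ ⟨hz.1, hzz.le⟩ hxz).trans ?_
        rw [← hself z hz.1]
        exact hmax z hz.1 z (min_le_left _ _)
      · rw [hPgt z x hxz]
        exact hmax z hz.1 x ((min_le_left _ _).trans hxz.le)
    · have hge : k z0 ≤ P z (alpha z) := by
        rcases hz.2.eq_or_lt with h1 | h1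
        · rw [h1]; exact hzero
        · exact (hpos_hi z hzz h1).le
      have hza : z < alpha z := by
        by_contra! h1
        exact absurd hge (not_le.2 (hPlow z hz.1 h1))
      rcases le_or_gt x z with hxz | hxz
      · rw [hPle z x hxz]
        exact (kle x hx.1).trans hge
      · rw [hPgt z x hxz, hPgt z _ hza]
        exact hmax z hz.1 x ((min_le_left _ _).trans hxz.le)
end
end
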